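/- Let S ⊆ {-1,0,1}^d \ {0} be a step set (with positive weights) that is symmetric over every coordinate axis and moves forwards and backwards in each coordinate. Then the total weight s_n of walks of length n taking steps in S, beginning at the origin, and never leaving ℕ^d satisfies s_n = S(1)^n · n^{-d/2} · [ (S(1)/π)^{d/2} · (b_1 ··· b_d)^{-1/2} + O(1/n) ] as n → ∞. -/

import Mathlib

open Finset Filter
open scoped Classical

noncomputable section

/-- Total weight of walks of length `n` with steps in `S` (weighted by `w`),
starting at the origin and never leaving `ℕ^d`. -/
def walkWeight (d : ℕ) (S : Finset (Fin d → ℤ)) (w : (Fin d → ℤ) → ℝ) (n : ℕ) : ℝ :=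
  ∑ f : Fin n → {i // i ∈ S},
    if ∀ m : ℕ, m ≤ n → ∀ j : Fin d,
        0 ≤ ∑ k ∈ Finset.univ.filter (fun k : Fin n => (k : ℕ) < m), ((f k : Fin d → ℤ) j)
    then ∏ k : Fin n, w (f k) else 0

/-- The step set `S` (with weights `w`) is symmetric over the `k`-th coordinate axis. -/
def SymmetricAxis (d : ℕ) (S : Finset (Fin d → ℤ)) (w : (Fin d → ℤ) → ℝ) (k : Fin d) : Prop :=
  ∀ i ∈ S, Function.update i k (-(i k)) ∈ S ∧ w (Function.update i k (-(i k))) = w i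

/-!
Each step is a set of coordinates to move together with a sign for each of them, and symmetry makes
the signs uniform and independent given these sets. Given the sets of a whole walk, its coordinates
are therefore independent simple random walks, where the `j`-th one makes as many steps `N j` as
there are sets containing `j`, so that `s_n` is a weighted sum of `∏ j, p (N j)`, where
`p m = (m.choose (m / 2)) / 2 ^ m` is the probability that a simple random walk of length `m`
started at `0` stays nonnegative. Wallis' product gives `p m = (π m / 2) ^ (-1/2) (1 + O(1/m))`.

Choosing the steps at random in proportion to their weight makes `N j` binomial with success
probability `q j = 2 b_j / S(1)`. Expand the product around the mean `N j = n q j`: the linear term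
averages to zero, the quadratic one to the relative variance of `N j`, which is `O(1/n)`, and the
event that some `N j` is less than half its mean has exponentially small probability.
-/

/-! ### Symmetrizing the signs -/

variable {d : ℕ} {S : Finset (Fin d → ℤ)} {w : (Fin d → ℤ) → ℝ}

/-- The walk that starts at `x` and takes the steps `f 0, f 1, …` never leaves the orthant `ℕ^d`. -/
def StaysNonneg {n : ℕ} (x : Fin d → ℤ) (f : Fin n → Fin d → ℤ) : Prop :=
  ∀ m ≤ n, ∀ j, 0 ≤ x j + ∑ k : Fin n with k.val < m, f k j

/-- The generalization of `walkWeight` to an arbitrary starting point `x`, which is what makes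
a recursion on the length possible. -/
def walkWeightFrom (S : Finset (Fin d → ℤ)) (w : (Fin d → ℤ) → ℝ) (n : ℕ) (x : Fin d → ℤ) : ℝ :=
  ∑ f : Fin n → {i // i ∈ S},
    if StaysNonneg x (fun k => (f k : Fin d → ℤ)) then ∏ k, w (f k) else 0

lemma walkWeightFrom_origin (n : ℕ) : walkWeightFrom S w n 0 = walkWeight d S w n := by
  simp only [walkWeightFrom, StaysNonneg, walkWeight, Pi.zero_apply, zero_add]

lemma sum_filter_lt_succ_cons {M : Type*} [AddCommMonoid M] {n : ℕ} (a : M) (f : Fin n → M)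
    (m : ℕ) :
    ∑ k : Fin (n + 1) with k.val < m + 1, Fin.cons (α := fun _ => M) a f k =
      a + ∑ k : Fin n with k.val < m, f k := by
  rw [sum_filter, Fin.sum_univ_succ, sum_filter]
  simp

lemma staysNonneg_cons {n : ℕ} {x a : Fin d → ℤ} {f : Fin n → Fin d → ℤ} :
    StaysNonneg x (Fin.cons (α := fun _ => Fin d → ℤ) a f) ↔
      (∀ j, 0 ≤ x j) ∧ StaysNonneg (x + a) f := by
  have partial_sum (m : ℕ) (j : Fin d) :
      ∑ k : Fin (n + 1) with k.val < m + 1, Fin.cons (α := fun _ => Fin d → ℤ) a f k j =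
        a j + ∑ k : Fin n with k.val < m, f k j := by
    simpa only [Finset.sum_apply, Pi.add_apply] using congrFun (sum_filter_lt_succ_cons a f m) j
  simp only [StaysNonneg, Pi.add_apply, add_assoc]
  constructor
  · exact fun h => ⟨fun j => by simpa using h 0 (Nat.zero_le _) j,
      fun m hm j => partial_sum m j ▸ h (m + 1) (by lia) j⟩
  · rintro ⟨hx, h⟩ (_ | m) hm j
    · simpa using hx j
    · exact partial_sum m j ▸ h m (by lia) j

lemma walkWeightFrom_zero (x : Fin d → ℤ) :
    walkWeightFrom S w 0 x = if ∀ j, 0 ≤ x j then 1 else 0 := by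
  simp [walkWeightFrom, StaysNonneg]

lemma walkWeightFrom_succ (n : ℕ) (x : Fin d → ℤ) :
    walkWeightFrom S w (n + 1) x =
      if ∀ j, 0 ≤ x j then ∑ i ∈ S, w i * walkWeightFrom S w n (x + i) else 0 := by
  have stays_cons (a : {i // i ∈ S}) (f : Fin n → {i // i ∈ S}) :
      StaysNonneg x (fun k => (Fin.cons (α := fun _ => {i // i ∈ S}) a f k : Fin d → ℤ)) ↔
        (∀ j, 0 ≤ x j) ∧ StaysNonneg (x + a.1) (fun k => (f k : Fin d → ℤ)) := by
    rw [← staysNonneg_cons]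
    exact iff_of_eq (congrArg _ (Fin.comp_cons Subtype.val a f))
  rw [walkWeightFrom, ← (Fin.consEquiv fun _ => {i // i ∈ S}).sum_comp, Fintype.sum_prod_type]
  simp only [Fin.consEquiv_apply, stays_cons, Fin.prod_univ_succ, Fin.cons_zero, Fin.cons_succ]
  split_ifs with hx
  · simp only [hx, implies_true, true_and]
    rw [← sum_coe_sort S]
    simp only [walkWeightFrom, mul_sum, mul_ite, mul_zero]
  · simp [hx]

/-- The probability that a simple random walk on `ℤ` started at `x` is nonnegative at all times
`0, …, m`. -/
def stayProb : ℕ → ℤ → ℝ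
  | 0, x => if 0 ≤ x then 1 else 0
  | m + 1, x => if 0 ≤ x then (stayProb m (x + 1) + stayProb m (x - 1)) / 2 else 0

lemma stayProb_of_neg (m : ℕ) {x : ℤ} (hx : x < 0) : stayProb m x = 0 := by
  cases m <;> simp [stayProb, hx.not_ge]

lemma stayProb_succ (m : ℕ) {x : ℤ} (hx : 0 ≤ x) :
    stayProb (m + 1) x = (stayProb m (x + 1) + stayProb m (x - 1)) / 2 :=
  if_pos hx

/-- The linear functional `φ ↦ ∑ (weight of the walk) * φ N`, summed over all walks of length `n`
with steps in `S`, where `N j` counts the steps of the walk that move the `j`-th coordinate. The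
recursion adds the first step; it uses that steps have coordinates in `{-1, 0, 1}`. -/
def moveSum (S : Finset (Fin d → ℤ)) (w : (Fin d → ℤ) → ℝ) :
    ℕ → ((Fin d → ℕ) → ℝ) →ₗ[ℝ] ℝ
  | 0 => LinearMap.proj 0
  | n + 1 => ∑ i ∈ S, w i • moveSum S w n ∘ₗ LinearMap.funLeft ℝ ℝ (· + fun j => (i j).natAbs)

lemma moveSum_zero (φ : (Fin d → ℕ) → ℝ) : moveSum S w 0 φ = φ 0 := rfl

lemma moveSum_succ (n : ℕ) (φ : (Fin d → ℕ) → ℝ) :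
    moveSum S w (n + 1) φ =
      ∑ i ∈ S, w i * moveSum S w n (fun N => φ (N + fun j => (i j).natAbs)) := by
  simp [moveSum, LinearMap.sum_apply, LinearMap.funLeft, Function.comp_def]

lemma SymmetricAxis.sum_mul_reflect {k : Fin d} (hk : SymmetricAxis d S w k)
    (G : (Fin d → ℤ) → ℝ) :
    ∑ i ∈ S, w i * G (Function.update i k (-(i k))) = ∑ i ∈ S, w i * G i :=
  sum_nbij' (fun i => Function.update i k (-(i k))) (fun i => Function.update i k (-(i k)))
    (fun i hi => (hk i hi).1) (fun i hi => (hk i hi).1) (by simp) (by simp)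
    (fun i hi => by rw [(hk i hi).2])

/-- The even part of a function on `ℤ`; averaging over the two signs of a symmetric step replaces
a function of that step by its even part. -/
def evenPart (g : ℤ → ℝ) (t : ℤ) : ℝ :=
  (g t + g (-t)) / 2

lemma SymmetricAxis.sum_mul_prod_update_evenPart {k : Fin d} (hk : SymmetricAxis d S w k)
    (g : Fin d → ℤ → ℝ) :
    ∑ i ∈ S, w i * ∏ j, Function.update g k (evenPart (g k)) j (i j) =
      ∑ i ∈ S, w i * ∏ j, g j (i j) := by
  have prod_eq (i : Fin d → ℤ) : ∏ j, Function.update g k (evenPart (g k)) j (i j) =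
      (∏ j, g j (i j) + ∏ j, g j (Function.update i k (-(i k)) j)) / 2 := by
    have prod_erase_congr {F G : Fin d → ℝ} (h : ∀ j ≠ k, F j = G j) :
        ∏ j ∈ univ.erase k, F j = ∏ j ∈ univ.erase k, G j :=
      prod_congr rfl fun j hj => h j (ne_of_mem_erase hj)
    simp only [← mul_prod_erase univ _ (mem_univ k), Function.update_self]
    rw [prod_erase_congr (G := fun j => g j (i j)) fun j hj => by rw [Function.update_of_ne hj],
      prod_erase_congr (F := fun j => g j (Function.update i k (-(i k)) j))
        (G := fun j => g j (i j)) fun j hj => by rw [Function.update_of_ne hj], evenPart]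
    ring
  have reflect := hk.sum_mul_reflect fun i => ∏ j, g j (i j)
  simp only [prod_eq, mul_div_assoc', mul_add, ← sum_div, sum_add_distrib, reflect,
    add_self_div_two]

lemma sum_mul_prod_evenPart (hsym : ∀ k, SymmetricAxis d S w k) (g : Fin d → ℤ → ℝ) :
    ∑ i ∈ S, w i * ∏ j, evenPart (g j) (i j) = ∑ i ∈ S, w i * ∏ j, g j (i j) := by
  suffices partially_even : ∀ s : Finset (Fin d),
      ∑ i ∈ S, w i * ∏ j, s.piecewise (fun j => evenPart (g j)) g j (i j) =
        ∑ i ∈ S, w i * ∏ j, g j (i j) by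
    simpa using partially_even univ
  intro s
  induction s using Finset.induction_on with
  | empty => simp
  | insert k s hk ih =>
    rw [← ih, piecewise_insert,
      ← (hsym k).sum_mul_prod_update_evenPart (s.piecewise (fun j => evenPart (g j)) g),
      piecewise_eq_of_notMem s _ _ hk]

lemma evenPart_stayProb_add (m : ℕ) {x t : ℤ} (hx : 0 ≤ x) (ht : t = -1 ∨ t = 0 ∨ t = 1) :
    evenPart (fun t => stayProb m (x + t)) t = stayProb (m + t.natAbs) x := by
  rcases ht with rfl | rfl | rfl
  · simp [evenPart, stayProb_succ m hx, sub_eq_add_neg, add_comm]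
  · simp [evenPart]
  · simp [evenPart, stayProb_succ m hx, sub_eq_add_neg]

lemma walkWeightFrom_eq_moveSum (hstep : ∀ i ∈ S, ∀ j, i j = -1 ∨ i j = 0 ∨ i j = 1)
    (hsym : ∀ k, SymmetricAxis d S w k) (n : ℕ) (x : Fin d → ℤ) :
    walkWeightFrom S w n x = moveSum S w n (fun N => ∏ j, stayProb (N j) (x j)) := by
  induction n generalizing x with
  | zero => simp [walkWeightFrom_zero, moveSum_zero, stayProb, prod_ite_zero]
  | succ n ih =>
    rw [walkWeightFrom_succ]
    split_ifs with hx
    · have symmetrize (N : Fin d → ℕ) :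
          ∑ i ∈ S, w i * ∏ j, stayProb (N j) (x j + i j) =
            ∑ i ∈ S, w i * ∏ j, stayProb (N j + (i j).natAbs) (x j) := by
        rw [← sum_mul_prod_evenPart hsym fun j t => stayProb (N j) (x j + t)]
        refine sum_congr rfl fun i hi => congrArg (w i * ·) (prod_congr rfl fun j _ => ?_)
        exact evenPart_stayProb_add _ (hx j) (hstep i hi j)
      simp only [ih, moveSum_succ, Pi.add_apply, ← smul_eq_mul, ← map_smul, ← map_sum]
      congr 1
      ext N
      simpa using symmetrize N
    · obtain ⟨j, hj⟩ := not_forall.mp hx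
      have prod_eq_zero (N : Fin d → ℕ) : ∏ j, stayProb (N j) (x j) = 0 :=
        Finset.prod_eq_zero (mem_univ j) (stayProb_of_neg _ (not_le.mp hj))
      simp only [prod_eq_zero]
      exact (map_zero _).symm

lemma walkWeight_eq_moveSum (hstep : ∀ i ∈ S, ∀ j, i j = -1 ∨ i j = 0 ∨ i j = 1)
    (hsym : ∀ k, SymmetricAxis d S w k) (n : ℕ) :
    walkWeight d S w n = moveSum S w n (fun N => ∏ j, stayProb (N j) 0) := by
  simpa using walkWeightFrom_origin (S := S) (w := w) n ▸ walkWeightFrom_eq_moveSum hstep hsym n 0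

/-! ### The simple random walk on the half-line -/

-- In terms of differences in the starting point, the recursion of `stayProb` is Pascal's rule; the
-- barrier at `-1` is accounted for by the symmetry of the middle binomial coefficients.
lemma stayProb_sub_stayProb_pred (m x : ℕ) :
    stayProb m x - stayProb m (x - 1) = m.choose ((m + x + 1) / 2) / 2 ^ m := by
  induction m generalizing x with
  | zero =>
    cases x with
    | zero => simp [stayProb]
    | succ x => simp [stayProb, show (0 : ℤ) ≤ x + 1 by lia,
        Nat.choose_eq_zero_of_lt (show 0 < (x + 1 + 1) / 2 by lia)]
  | succ m ih =>
    have pascal : ((m + 1).choose ((m + 1 + x + 1) / 2) : ℝ) / 2 ^ (m + 1) =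
        (m.choose ((m + x) / 2) / 2 ^ m + m.choose ((m + (x + 1) + 1) / 2) / 2 ^ m) / 2 := by
      rw [show (m + 1 + x + 1) / 2 = (m + x) / 2 + 1 by lia,
        show (m + (x + 1) + 1) / 2 = (m + x) / 2 + 1 by lia, Nat.choose_succ_succ', pow_succ]
      push_cast
      ring
    have diff_succ := ih (x + 1)
    rw [pascal, stayProb_succ m (Int.natCast_nonneg x)]
    cases x with
    | zero =>
      have diff_zero := ih 0
      have middle : m.choose ((m + 1) / 2) = m.choose (m / 2) :=
        Nat.choose_symm_of_eq_add (by lia)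
      simp only [Nat.cast_zero, zero_sub, stayProb_of_neg _ (show (-1 : ℤ) < 0 by decide), zero_add,
        Nat.cast_one, sub_self, add_zero, middle] at diff_zero diff_succ ⊢
      linarith
    | succ x =>
      have diff_pred := ih x
      rw [stayProb_succ m (by lia)]
      push_cast at diff_succ diff_pred ⊢
      simp only [add_sub_cancel_right, ← add_assoc] at diff_succ diff_pred ⊢
      linarith

lemma stayProb_zero (m : ℕ) : stayProb m 0 = m.choose (m / 2) / 2 ^ m := by
  have middle : m.choose ((m + 1) / 2) = m.choose (m / 2) :=
    Nat.choose_symm_of_eq_add (by lia)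
  simpa [stayProb_of_neg, middle] using stayProb_sub_stayProb_pred m 0

lemma stayProb_two_mul (k : ℕ) : stayProb (2 * k) 0 = k.centralBinom / 4 ^ k := by
  rw [stayProb_zero, Nat.mul_div_cancel_left k two_pos, ← Nat.centralBinom_eq_two_mul_choose,
    pow_mul]
  norm_num

lemma stayProb_two_mul_add_one (k : ℕ) :
    stayProb (2 * k + 1) 0 = (k + 1).centralBinom / 4 ^ (k + 1) := by
  have pascal : (k + 1).centralBinom = 2 * (2 * k + 1).choose k := by
    rw [Nat.centralBinom_eq_two_mul_choose, mul_add_one, Nat.choose_succ_succ',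
      Nat.choose_symm_half]
    ring
  have pow_eq : (4 : ℝ) ^ (k + 1) = 2 * 2 ^ (2 * k + 1) := by
    rw [show (4 : ℝ) = 2 ^ 2 by norm_num, ← pow_mul, mul_add_one, pow_succ' 2 (2 * k + 1)]
  rw [stayProb_zero, show (2 * k + 1) / 2 = k by lia, pascal, pow_eq]
  push_cast
  field_simp

lemma centralBinom_div_four_pow_sq_mul_wallis (k : ℕ) :
    ((k.centralBinom : ℝ) / 4 ^ k) ^ 2 * (2 * k + 1) * Real.Wallis.W k = 1 := by
  have central : (k.centralBinom : ℝ) = (2 * k).factorial / k.factorial ^ 2 := by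
    rw [eq_div_iff (by positivity), Nat.centralBinom_eq_two_mul_choose, sq, ← mul_assoc]
    exact_mod_cast two_mul k ▸ Nat.add_choose_mul_factorial_mul_factorial k k
  have pow_eq : (2 : ℝ) ^ (4 * k) = (4 ^ k) ^ 2 := by
    rw [show (4 : ℝ) = 2 ^ 2 by norm_num, ← pow_mul, ← pow_mul]
    ring_nf
  rw [Real.Wallis.W_eq_factorial_ratio, central, pow_eq]
  field_simp

lemma two_le_centralBinom_div_four_pow_sq (k : ℕ) :
    2 ≤ ((k.centralBinom : ℝ) / 4 ^ k) ^ 2 * (2 * k + 1) * Real.pi := by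
  have wallis := centralBinom_div_four_pow_sq_mul_wallis k
  calc 2 = 2 * (((k.centralBinom : ℝ) / 4 ^ k) ^ 2 * (2 * k + 1) * Real.Wallis.W k) := by
        rw [wallis, mul_one]
    _ ≤ 2 * (((k.centralBinom : ℝ) / 4 ^ k) ^ 2 * (2 * k + 1) * (Real.pi / 2)) := by
        gcongr
        exact Real.Wallis.W_le k
    _ = _ := by ring

lemma centralBinom_div_four_pow_sq_le_one (k : ℕ) :
    ((k.centralBinom : ℝ) / 4 ^ k) ^ 2 * k * Real.pi ≤ 1 := by
  set c := ((k.centralBinom : ℝ) / 4 ^ k) ^ 2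
  have k_le : (k : ℝ) ≤ (2 * k + 1) ^ 2 / (4 * (k + 1)) := by
    rw [le_div_iff₀ (by positivity)]
    linarith
  calc c * k * Real.pi ≤ c * ((2 * k + 1) ^ 2 / (4 * (k + 1))) * Real.pi := by gcongr
    _ = c * (2 * k + 1) * ((2 * k + 1) / (2 * k + 2) * (Real.pi / 2)) := by field_simp; ring
    _ ≤ c * (2 * k + 1) * Real.Wallis.W k := by gcongr; exact Real.Wallis.le_W k
    _ = 1 := centralBinom_div_four_pow_sq_mul_wallis k

lemma stayProb_nonneg (m : ℕ) (x : ℤ) : 0 ≤ stayProb m x := by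
  induction m generalizing x with
  | zero => rw [stayProb]; positivity
  | succ m ih => rw [stayProb]; have := ih (x + 1); have := ih (x - 1); positivity

lemma stayProb_le_one (m : ℕ) (x : ℤ) : stayProb m x ≤ 1 := by
  induction m generalizing x with
  | zero => rw [stayProb]; split_ifs <;> norm_num
  | succ m ih =>
    rw [stayProb]
    split_ifs
    · linarith [ih (x + 1), ih (x - 1)]
    · exact zero_le_one

lemma two_le_stayProb_sq (m : ℕ) : 2 ≤ stayProb m 0 ^ 2 * (m + 2) * Real.pi := by
  obtain ⟨k, rfl | rfl⟩ := m.even_or_odd'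
  · rw [stayProb_two_mul]
    refine (two_le_centralBinom_div_four_pow_sq k).trans ?_
    gcongr _ * ?_ * _
    push_cast
    linarith
  · rw [stayProb_two_mul_add_one]
    refine (two_le_centralBinom_div_four_pow_sq (k + 1)).trans_eq ?_
    push_cast
    ring

lemma stayProb_sq_le_two (m : ℕ) : stayProb m 0 ^ 2 * m * Real.pi ≤ 2 := by
  obtain ⟨k, rfl | rfl⟩ := m.even_or_odd'
  · rw [stayProb_two_mul]
    have := centralBinom_div_four_pow_sq_le_one k
    push_cast
    linarith
  · rw [stayProb_two_mul_add_one]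
    calc _ ≤ (((k + 1).centralBinom : ℝ) / 4 ^ (k + 1)) ^ 2 * (2 * (k + 1 : ℕ)) * Real.pi := by
          gcongr; push_cast; linarith
      _ ≤ 2 := by linarith [centralBinom_div_four_pow_sq_le_one (k + 1)]

/-! ### Linearizing a product -/

-- As `y ^ (-1/2) ≤ r`, this is the tangent line bound `(3 - y) / 2 ≤ y ^ (-1/2)`.
lemma three_le_add_two_mul {r y : ℝ} (hr : 0 ≤ r) (h : 1 ≤ r ^ 2 * y) : 3 ≤ y + 2 * r := by
  have tangent : 0 ≤ r ^ 2 * (y + 2 * r - 3) :=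
    calc 0 ≤ (r - 1) ^ 2 * (2 * r + 1) := by positivity
      _ ≤ r ^ 2 * (y + 2 * r - 3) := by linarith
  have r_sq_pos : 0 < r ^ 2 := (sq_nonneg r).lt_of_ne fun h0 => by norm_num [← h0] at h
  linarith [nonneg_of_mul_nonneg_right tangent r_sq_pos]

lemma le_one_add_half_add_sq {r x : ℝ} (hx : 1 / 2 ≤ x) (h : r ^ 2 * x ≤ 1) :
    r ≤ 1 + (1 - x) / 2 + (1 - x) ^ 2 := by
  have bound_nonneg : 0 ≤ 1 + (1 - x) / 2 + (1 - x) ^ 2 := by nlinarith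
  have cubic_nonneg : 0 ≤ 5 / 4 * x + (x - 1) ^ 3 := by nlinarith [sq_nonneg (x - 1)]
  have one_le : 1 ≤ (1 + (1 - x) / 2 + (1 - x) ^ 2) ^ 2 * x := by
    linarith [mul_nonneg (sq_nonneg (1 - x)) cubic_nonneg]
  exact le_of_sq_le_sq (le_of_mul_le_mul_right (h.trans one_le) (by linarith)) bound_nonneg

lemma abs_sub_one_sub_half_le {r x δ : ℝ} (hr : 0 ≤ r) (hx : 1 / 2 ≤ x) (hδ : 0 ≤ δ)
    (hlower : 1 ≤ r ^ 2 * (x + δ)) (hupper : r ^ 2 * x ≤ 1) :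
    |r - 1 - (1 - x) / 2| ≤ (1 - x) ^ 2 + δ := by
  have := three_le_add_two_mul hr hlower
  have := le_one_add_half_add_sq hx hupper
  rw [abs_le]
  constructor <;> linarith [sq_nonneg (1 - x)]

lemma exists_abs_prod_sub_one_sub_sum_le {ι : Type*} (s : Finset ι) (R : ℝ) (B : ι → ℝ) :
    ∃ C : ℝ, ∀ (r a : ι → ℝ) (η : ℝ), (∀ j ∈ s, |r j| ≤ R) → (∀ j ∈ s, |a j| ≤ B j) →
      (∀ j ∈ s, a j ^ 2 ≤ η) → (∀ j ∈ s, |r j - 1 - a j| ≤ η) →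
        |∏ j ∈ s, r j - 1 - ∑ j ∈ s, a j| ≤ C * η := by
  induction s using Finset.induction_on with
  | empty => exact ⟨0, fun r a η _ _ _ _ => by simp⟩
  | insert i s hi ih =>
    obtain ⟨C, ih⟩ := ih
    refine ⟨R * C + #s + (1 + ∑ j ∈ s, B j), fun r a η hr ha hsq hra => ?_⟩
    rw [forall_mem_insert] at hr ha hsq hra
    have prod_bound := ih r a η hr.2 ha.2 hsq.2 hra.2
    rw [prod_insert hi, sum_insert hi]
    set P := ∏ j ∈ s, r j
    set A := ∑ j ∈ s, a j with hA
    have abs_A_le : |A| ≤ ∑ j ∈ s, B j := (abs_sum_le_sum_abs _ _).trans (sum_le_sum ha.2)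
    have cross_bound : |a i * A| ≤ #s * η := by
      rw [hA, mul_sum, ← nsmul_eq_mul]
      refine (abs_sum_le_sum_abs _ _).trans (sum_le_card_nsmul _ _ _ fun j hj => ?_)
      rw [abs_mul]
      nlinarith [sq_nonneg (|a i| - |a j|), sq_abs (a i), sq_abs (a j), hsq.1, hsq.2 j hj]
    have main_bound : |r i * (P - 1 - A)| ≤ R * (C * η) := by
      rw [abs_mul]
      exact mul_le_mul hr.1 prod_bound (abs_nonneg _) ((abs_nonneg _).trans hr.1)
    have factor_bound : |(r i - 1 - a i) * (1 + A)| ≤ η * (1 + ∑ j ∈ s, B j) := by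
      rw [abs_mul]
      refine mul_le_mul hra.1 ?_ (abs_nonneg _) ((abs_nonneg _).trans hra.1)
      calc |1 + A| ≤ |1| + |A| := abs_add_le _ _
        _ ≤ 1 + ∑ j ∈ s, B j := by rw [abs_one]; gcongr
    calc |r i * P - 1 - (a i + A)|
        = |r i * (P - 1 - A) + a i * A + (r i - 1 - a i) * (1 + A)| := by ring_nf
      _ ≤ |r i * (P - 1 - A)| + |a i * A| + |(r i - 1 - a i) * (1 + A)| := abs_add_three _ _ _
      _ ≤ R * (C * η) + #s * η + η * (1 + ∑ j ∈ s, B j) := by gcongr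
      _ = _ := by ring

/-! ### Averaging over the moved coordinates -/

/-- The probability that a step, chosen with probability proportional to its weight, moves the
`k`-th coordinate. -/
def moveProb (S : Finset (Fin d → ℤ)) (w : (Fin d → ℤ) → ℝ) (k : Fin d) : ℝ :=
  (∑ i ∈ S with i k ≠ 0, w i) / ∑ i ∈ S, w i

lemma moveProb_eq_two_mul_forward_div (hstep : ∀ i ∈ S, ∀ j, i j = -1 ∨ i j = 0 ∨ i j = 1)
    {k : Fin d} (hk : SymmetricAxis d S w k) :
    moveProb S w k = 2 * (∑ i ∈ S with i k = 1, w i) / ∑ i ∈ S, w i := by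
  have backward_eq_forward : ∑ i ∈ S with i k = -1, w i = ∑ i ∈ S with i k = 1, w i := by
    simpa [sum_filter, neg_eq_iff_eq_neg] using hk.sum_mul_reflect fun i => if i k = 1 then 1 else 0
  rw [moveProb, two_mul]
  nth_rw 2 [← backward_eq_forward]
  simp only [sum_filter, ← sum_add_distrib]
  congr 1
  refine sum_congr rfl fun i hi => ?_
  rcases hstep i hi k with h | h | h <;> simp [h]

lemma moveProb_nonneg (hw : ∀ i ∈ S, 0 ≤ w i) (k : Fin d) : 0 ≤ moveProb S w k :=
  div_nonneg (sum_nonneg fun i hi => hw i (mem_of_mem_filter i hi)) (sum_nonneg hw)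

lemma moveProb_le_one (hw : ∀ i ∈ S, 0 ≤ w i) (k : Fin d) : moveProb S w k ≤ 1 :=
  div_le_one_of_le₀ (sum_le_sum_of_subset_of_nonneg (filter_subset _ S) fun i hi _ => hw i hi)
    (sum_nonneg hw)

lemma moveSum_mono (hstep : ∀ i ∈ S, ∀ j, i j = -1 ∨ i j = 0 ∨ i j = 1)
    (hw : ∀ i ∈ S, 0 ≤ w i) {n : ℕ} {φ ψ : (Fin d → ℕ) → ℝ}
    (h : ∀ N, (∀ k, N k ≤ n) → φ N ≤ ψ N) : moveSum S w n φ ≤ moveSum S w n ψ := by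
  induction n generalizing φ ψ with
  | zero => exact h 0 fun _ => le_rfl
  | succ n ih =>
    simp only [moveSum_succ]
    refine sum_le_sum fun i hi => mul_le_mul_of_nonneg_left ?_ (hw i hi)
    refine ih fun N hN => h _ fun k => ?_
    have := hN k
    have := hstep i hi k
    simp only [Pi.add_apply]
    lia

lemma abs_moveSum_le (hstep : ∀ i ∈ S, ∀ j, i j = -1 ∨ i j = 0 ∨ i j = 1)
    (hw : ∀ i ∈ S, 0 ≤ w i) {n : ℕ} {φ ψ : (Fin d → ℕ) → ℝ}
    (h : ∀ N, (∀ k, N k ≤ n) → |φ N| ≤ ψ N) : |moveSum S w n φ| ≤ moveSum S w n ψ := by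
  refine abs_le.mpr ⟨?_, moveSum_mono hstep hw fun N hN => (abs_le.mp (h N hN)).2⟩
  rw [← map_neg]
  exact moveSum_mono hstep hw fun N hN => (abs_le.mp (h N hN)).1

lemma moveSum_one (n : ℕ) : moveSum S w n 1 = (∑ i ∈ S, w i) ^ n := by
  induction n with
  | zero => simp [moveSum_zero]
  | succ n ih =>
    simp only [moveSum_succ, Pi.one_apply, pow_succ', sum_mul]
    exact sum_congr rfl fun i _ => congrArg (w i * ·) ih

section Marginals

variable (hstep : ∀ i ∈ S, ∀ j, i j = -1 ∨ i j = 0 ∨ i j = 1) (hT : ∑ i ∈ S, w i ≠ 0)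
include hstep hT

lemma moveSum_coord_succ (k : Fin d) (n : ℕ) (F : ℕ → ℝ) :
    moveSum S w (n + 1) (fun N => F (N k)) =
      (∑ i ∈ S, w i) * ((1 - moveProb S w k) * moveSum S w n (fun N => F (N k)) +
        moveProb S w k * moveSum S w n (fun N => F (N k + 1))) := by
  have split_step (i : Fin d → ℤ) (hi : i ∈ S) :
      w i * moveSum S w n (fun N => F (N k + (i k).natAbs)) =
        w i * moveSum S w n (fun N => F (N k)) +
          (if i k ≠ 0 then w i else 0) *
            (moveSum S w n (fun N => F (N k + 1)) - moveSum S w n (fun N => F (N k))) := by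
    rcases hstep i hi k with h | h | h <;> simp [h, ← mul_add]
  simp only [moveSum_succ, Pi.add_apply]
  rw [sum_congr rfl split_step, sum_add_distrib, ← sum_mul, ← sum_mul, ← sum_filter, moveProb]
  field_simp
  ring

lemma moveSum_coord_add (k : Fin d) (n : ℕ) (c : ℝ) :
    moveSum S w n (fun N => N k + c) = (∑ i ∈ S, w i) ^ n * (n * moveProb S w k + c) := by
  induction n generalizing c with
  | zero => simp [moveSum_zero]
  | succ n ih =>
    rw [moveSum_coord_succ hstep hT k n fun m => (m : ℝ) + c]
    simp only [Nat.cast_add_one, add_assoc, ih]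
    ring

lemma moveSum_coord_add_sq (k : Fin d) (n : ℕ) (c : ℝ) :
    moveSum S w n (fun N => (N k + c) ^ 2) =
      (∑ i ∈ S, w i) ^ n *
        ((n * moveProb S w k + c) ^ 2 + n * (moveProb S w k * (1 - moveProb S w k))) := by
  induction n generalizing c with
  | zero => simp [moveSum_zero]
  | succ n ih =>
    rw [moveSum_coord_succ hstep hT k n fun m => ((m : ℝ) + c) ^ 2]
    simp only [Nat.cast_add_one, add_assoc, ih]
    ring

lemma moveSum_pow_coord (k : Fin d) (n : ℕ) (r : ℝ) :
    moveSum S w n (fun N => r ^ N k) =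
      ((∑ i ∈ S, w i) * (1 - moveProb S w k + moveProb S w k * r)) ^ n := by
  induction n with
  | zero => simp [moveSum_zero]
  | succ n ih =>
    have shift : moveSum S w n (fun N => r ^ (N k + 1)) = r * moveSum S w n (fun N => r ^ N k) := by
      rw [← smul_eq_mul, ← map_smul]
      exact congrArg _ (funext fun N => pow_succ' r (N k))
    rw [moveSum_coord_succ hstep hT k n fun m => r ^ m, shift, ih, pow_succ]
    ring

end Marginals

/-- The probability `stayProb m 0` rescaled to be asymptotic to `1` as `m ∼ n * q → ∞`; it is then
close to `(m / (n * q)) ^ (-1 / 2)`. -/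
def scaledStayProb (q : ℝ) (n m : ℕ) : ℝ :=
  stayProb m 0 * √(Real.pi * n * q / 2)

/-- The first-order term of the expansion of `(m / (n * q)) ^ (-1 / 2)` around `m = n * q`. -/
def linearTerm (q : ℝ) (n m : ℕ) : ℝ :=
  (1 - m / (n * q)) / 2

/-- A bound, up to a constant factor, for the error of the linear approximation of a product of
`d` factors `scaledStayProb` that is due to one of them. The exponential is at least `1` when `m` is
less than half of `n * q`, where only the trivial bound by a multiple of `n ^ d` is available. -/
def errorTerm (d : ℕ) (q : ℝ) (n m : ℕ) : ℝ :=
  4 * linearTerm q n m ^ 2 + 2 / (n * q) + n ^ d * Real.exp (n * q / 2 - m)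

section Pointwise

variable {q : ℝ} {n : ℕ} (m : ℕ)

lemma scaledStayProb_nonneg : 0 ≤ scaledStayProb q n m :=
  mul_nonneg (stayProb_nonneg m 0) (Real.sqrt_nonneg _)

lemma scaledStayProb_le (hn : 1 ≤ n) : scaledStayProb q n m ≤ n * √(Real.pi * q / 2) := by
  rw [scaledStayProb, show Real.pi * n * q / 2 = n * (Real.pi * q / 2) by ring,
    Real.sqrt_mul n.cast_nonneg]
  have sqrt_le : √(n : ℝ) ≤ n := Real.sqrt_le_iff.mpr
    ⟨n.cast_nonneg, le_self_pow₀ (Nat.one_le_cast.mpr hn) two_ne_zero⟩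
  calc stayProb m 0 * (√n * √(Real.pi * q / 2)) ≤ 1 * (n * √(Real.pi * q / 2)) := by
        gcongr
        exact stayProb_le_one m 0
    _ = _ := one_mul _

lemma errorTerm_nonneg (hq : 0 ≤ q) : 0 ≤ errorTerm d q n m := by
  unfold errorTerm
  positivity

lemma pow_le_errorTerm (hq : 0 < q) (hn : 0 < n) (hm : m / (n * q) < 1 / 2) :
    (n : ℝ) ^ d ≤ errorTerm d q n m := by
  rw [div_lt_iff₀ (by positivity)] at hm
  have one_le_exp : 1 ≤ Real.exp (n * q / 2 - m) := Real.one_le_exp (by linarith)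
  calc (n : ℝ) ^ d ≤ n ^ d * Real.exp (n * q / 2 - m) :=
        le_mul_of_one_le_right (by positivity) one_le_exp
    _ ≤ errorTerm d q n m := le_add_of_nonneg_left (by positivity)

variable {m}

lemma abs_linearTerm_le (hq : 0 < q) (hm : m ≤ n) : |linearTerm q n m| ≤ 1 + 1 / q := by
  have ratio_le : (m : ℝ) / (n * q) ≤ 1 / q := by
    rw [← div_div]
    gcongr
    exact div_le_one_of_le₀ (Nat.cast_le.mpr hm) n.cast_nonneg
  have ratio_nonneg : 0 ≤ (m : ℝ) / (n * q) := by positivity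
  rw [linearTerm, abs_le]
  constructor <;> linarith

lemma scaledStayProb_sq_mul_ratio_le (hq : 0 < q) (hn : 0 < n) :
    scaledStayProb q n m ^ 2 * (m / (n * q)) ≤ 1 := by
  rw [scaledStayProb, mul_pow, Real.sq_sqrt (by positivity)]
  calc _ = stayProb m 0 ^ 2 * m * Real.pi / 2 := by field_simp
    _ ≤ 1 := by linarith [stayProb_sq_le_two m]

lemma one_le_scaledStayProb_sq_mul (hq : 0 < q) (hn : 0 < n) :
    1 ≤ scaledStayProb q n m ^ 2 * (m / (n * q) + 2 / (n * q)) := by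
  rw [scaledStayProb, mul_pow, Real.sq_sqrt (by positivity)]
  calc 1 ≤ stayProb m 0 ^ 2 * (m + 2) * Real.pi / 2 := by linarith [two_le_stayProb_sq m]
    _ = _ := by field_simp

lemma abs_scaledStayProb_le_two (hq : 0 < q) (hn : 0 < n) (hm : 1 / 2 ≤ (m : ℝ) / (n * q)) :
    |scaledStayProb q n m| ≤ 2 :=
  abs_le_of_sq_le_sq (by nlinarith [scaledStayProb_sq_mul_ratio_le (m := m) hq hn]) zero_le_two

lemma linearTerm_sq_le_errorTerm (hq : 0 ≤ q) : linearTerm q n m ^ 2 ≤ errorTerm d q n m :=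
  calc linearTerm q n m ^ 2 ≤ 4 * linearTerm q n m ^ 2 := by linarith [sq_nonneg (linearTerm q n m)]
    _ ≤ errorTerm d q n m := by
        rw [errorTerm, add_assoc]
        exact le_add_of_nonneg_right (by positivity)

lemma abs_scaledStayProb_sub_le_errorTerm (hq : 0 < q) (hn : 0 < n)
    (hm : 1 / 2 ≤ (m : ℝ) / (n * q)) :
    |scaledStayProb q n m - 1 - linearTerm q n m| ≤ errorTerm d q n m :=
  calc _ ≤ (1 - m / (n * q)) ^ 2 + 2 / (n * q) :=
        abs_sub_one_sub_half_le (scaledStayProb_nonneg m) hm (by positivity)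
          (one_le_scaledStayProb_sq_mul hq hn) (scaledStayProb_sq_mul_ratio_le hq hn)
    _ = 4 * linearTerm q n m ^ 2 + 2 / (n * q) := by rw [linearTerm]; ring
    _ ≤ errorTerm d q n m := le_add_of_nonneg_right (by positivity)

end Pointwise

section ProductApproximation

variable {q : Fin d → ℝ} (hq : ∀ k, 0 < q k)
include hq

lemma exists_abs_prod_scaledStayProb_sub_le_of_half_le :
    ∃ C : ℝ, ∀ n > 0, ∀ N : Fin d → ℕ, (∀ k, N k ≤ n) →
      (∀ k, 1 / 2 ≤ (N k : ℝ) / (n * q k)) →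
        |∏ k, scaledStayProb (q k) n (N k) - 1 - ∑ k, linearTerm (q k) n (N k)| ≤
          C * ∑ k, errorTerm d (q k) n (N k) := by
  obtain ⟨C, hC⟩ := exists_abs_prod_sub_one_sub_sum_le univ 2 fun k => 1 + 1 / q k
  refine ⟨C, fun n hn N hNn hN => hC _ _ _ (fun k _ => abs_scaledStayProb_le_two (hq k) hn (hN k))
    (fun k _ => abs_linearTerm_le (hq k) (hNn k)) (fun k _ => ?_) (fun k _ => ?_)⟩
  all_goals
    refine le_trans ?_ (single_le_sum (fun k _ => errorTerm_nonneg (N k) (hq k).le) (mem_univ k))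
  · exact linearTerm_sq_le_errorTerm (hq k).le
  · exact abs_scaledStayProb_sub_le_errorTerm (hq k) hn (hN k)

lemma exists_abs_prod_scaledStayProb_sub_le_of_lt_half :
    ∃ C : ℝ, ∀ n > 0, ∀ N : Fin d → ℕ, (∀ k, N k ≤ n) →
      (∃ k, (N k : ℝ) / (n * q k) < 1 / 2) →
        |∏ k, scaledStayProb (q k) n (N k) - 1 - ∑ k, linearTerm (q k) n (N k)| ≤
          C * ∑ k, errorTerm d (q k) n (N k) := by
  refine ⟨∏ k, √(Real.pi * q k / 2) + 1 + ∑ k, (1 + 1 / q k), fun n hn N hNn ⟨k, hk⟩ => ?_⟩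
  have coeff_nonneg : 0 ≤ ∑ k, (1 + 1 / q k) :=
    sum_nonneg fun k _ => by have := hq k; positivity
  have one_le_pow : (1 : ℝ) ≤ n ^ d := one_le_pow₀ (Nat.one_le_cast.mpr hn)
  have pow_le_error : (n : ℝ) ^ d ≤ ∑ k, errorTerm d (q k) n (N k) :=
    (pow_le_errorTerm (N k) (hq k) hn hk).trans
      (single_le_sum (fun k _ => errorTerm_nonneg (N k) (hq k).le) (mem_univ k))
  have prod_nonneg : 0 ≤ ∏ k, scaledStayProb (q k) n (N k) :=
    Finset.prod_nonneg fun k _ => scaledStayProb_nonneg (N k)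
  have prod_le : ∏ k, scaledStayProb (q k) n (N k) ≤ (∏ k, √(Real.pi * q k / 2)) * n ^ d :=
    calc _ ≤ ∏ k, (n * √(Real.pi * q k / 2)) :=
          prod_le_prod (fun k _ => scaledStayProb_nonneg (N k))
            fun k _ => scaledStayProb_le (N k) hn
      _ = _ := by rw [prod_mul_distrib, prod_const, card_univ, Fintype.card_fin, mul_comm]
  have sum_le : |∑ k, linearTerm (q k) n (N k)| ≤ ∑ k, (1 + 1 / q k) :=
    (abs_sum_le_sum_abs _ _).trans (sum_le_sum fun k _ => abs_linearTerm_le (hq k) (hNn k))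
  calc _ ≤ |∏ k, scaledStayProb (q k) n (N k)| + |(1 : ℝ)| +
          |∑ k, linearTerm (q k) n (N k)| :=
        (abs_sub _ _).trans (by gcongr; exact abs_sub _ _)
    _ ≤ (∏ k, √(Real.pi * q k / 2)) * n ^ d + 1 * n ^ d + (∑ k, (1 + 1 / q k)) * n ^ d := by
        rw [abs_of_nonneg prod_nonneg, abs_one, one_mul]
        gcongr
        exact sum_le.trans (le_mul_of_one_le_right coeff_nonneg one_le_pow)
    _ = (∏ k, √(Real.pi * q k / 2) + 1 + ∑ k, (1 + 1 / q k)) * n ^ d := by ring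
    _ ≤ _ := by gcongr

lemma exists_abs_prod_scaledStayProb_sub_le :
    ∃ C : ℝ, ∀ n > 0, ∀ N : Fin d → ℕ, (∀ k, N k ≤ n) →
      |∏ k, scaledStayProb (q k) n (N k) - 1 - ∑ k, linearTerm (q k) n (N k)| ≤
        C * ∑ k, errorTerm d (q k) n (N k) := by
  obtain ⟨C, hC⟩ := exists_abs_prod_scaledStayProb_sub_le_of_half_le hq
  obtain ⟨D, hD⟩ := exists_abs_prod_scaledStayProb_sub_le_of_lt_half hq
  refine ⟨max C D, fun n hn N hN => ?_⟩
  have error_nonneg : 0 ≤ ∑ k, errorTerm d (q k) n (N k) :=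
    sum_nonneg fun k _ => errorTerm_nonneg (N k) (hq k).le
  by_cases h : ∀ k, 1 / 2 ≤ (N k : ℝ) / (n * q k)
  · exact (hC n hn N hN h).trans (by gcongr; exact le_max_left C D)
  · exact (hD n hn N hN (by simpa using h)).trans (by gcongr; exact le_max_right C D)

end ProductApproximation

lemma moveSum_linearTerm (hstep : ∀ i ∈ S, ∀ j, i j = -1 ∨ i j = 0 ∨ i j = 1)
    (hT : ∑ i ∈ S, w i ≠ 0) {k : Fin d} (hq : moveProb S w k ≠ 0) {n : ℕ} (hn : n ≠ 0) :
    moveSum S w n (fun N => linearTerm (moveProb S w k) n (N k)) = 0 := by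
  set q := moveProb S w k with hqdef
  have eq_smul : (fun N : Fin d → ℕ => linearTerm q n (N k)) =
      (-1 / (2 * (n * q))) • fun N : Fin d → ℕ => (N k : ℝ) + -(n * q) := by
    ext N
    simp only [linearTerm, Pi.smul_apply, smul_eq_mul]
    field_simp
    ring
  rw [eq_smul, map_smul, moveSum_coord_add hstep hT, ← hqdef, add_neg_cancel, mul_zero, smul_zero]

lemma moveSum_linearTerm_sq (hstep : ∀ i ∈ S, ∀ j, i j = -1 ∨ i j = 0 ∨ i j = 1)
    (hT : ∑ i ∈ S, w i ≠ 0) {k : Fin d} (hq : moveProb S w k ≠ 0) {n : ℕ} (hn : n ≠ 0) :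
    moveSum S w n (fun N => linearTerm (moveProb S w k) n (N k) ^ 2) =
      (1 - moveProb S w k) / (4 * moveProb S w k) * ((∑ i ∈ S, w i) ^ n / n) := by
  set q := moveProb S w k with hqdef
  have eq_smul : (fun N : Fin d → ℕ => linearTerm q n (N k) ^ 2) =
      (1 / (2 * (n * q)) ^ 2) • fun N : Fin d → ℕ => ((N k : ℝ) + -(n * q)) ^ 2 := by
    ext N
    simp only [linearTerm, Pi.smul_apply, smul_eq_mul]
    field_simp
    ring
  rw [eq_smul, map_smul, moveSum_coord_add_sq hstep hT, ← hqdef, add_neg_cancel, smul_eq_mul]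
  field_simp
  ring

lemma moveSum_exp_sub_le (hstep : ∀ i ∈ S, ∀ j, i j = -1 ∨ i j = 0 ∨ i j = 1)
    (hw : ∀ i ∈ S, 0 ≤ w i) (hT : ∑ i ∈ S, w i ≠ 0) (k : Fin d) (n : ℕ) :
    moveSum S w n (fun N => Real.exp (n * moveProb S w k / 2 - N k)) ≤
      (∑ i ∈ S, w i) ^ n * Real.exp (-(moveProb S w k * (1 / 2 - Real.exp (-1)) * n)) := by
  set q := moveProb S w k with hqdef
  have T_nonneg : 0 ≤ ∑ i ∈ S, w i := sum_nonneg hw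
  have eq_smul : (fun N : Fin d → ℕ => Real.exp (n * q / 2 - N k)) =
      Real.exp (n * q / 2) • fun N : Fin d → ℕ => Real.exp (-1) ^ N k := by
    ext N
    rw [Pi.smul_apply, smul_eq_mul, ← Real.exp_nat_mul, ← Real.exp_add]
    ring_nf
  have base_nonneg : 0 ≤ 1 - q + q * Real.exp (-1) :=
    add_nonneg (sub_nonneg.mpr (moveProb_le_one hw k))
      (mul_nonneg (moveProb_nonneg hw k) (Real.exp_pos _).le)
  have base_le : 1 - q + q * Real.exp (-1) ≤ Real.exp (-(q * (1 - Real.exp (-1)))) := by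
    linarith [Real.add_one_le_exp (-(q * (1 - Real.exp (-1))))]
  rw [eq_smul, map_smul, moveSum_pow_coord hstep hT, ← hqdef, smul_eq_mul, mul_pow]
  calc _ ≤ Real.exp (n * q / 2) *
          ((∑ i ∈ S, w i) ^ n * Real.exp (-(q * (1 - Real.exp (-1)))) ^ n) := by gcongr
    _ = _ := by
        rw [← Real.exp_nat_mul, mul_left_comm, ← Real.exp_add]
        ring_nf

lemma isBigO_pow_mul_exp_neg_mul_one_div (d : ℕ) {κ : ℝ} (hκ : 0 < κ) :
    (fun n : ℕ => (n : ℝ) ^ d * Real.exp (-(κ * n))) =O[atTop] fun n : ℕ => 1 / (n : ℝ) := by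
  have pow_succ_isBigO : (fun n : ℕ => (n : ℝ) ^ (d + 1)) =O[atTop] fun n : ℕ => Real.exp (κ * n) :=
    (isLittleO_pow_exp_pos_mul_atTop (d + 1) hκ).isBigO.comp_tendsto tendsto_natCast_atTop_atTop
  refine (pow_succ_isBigO.mul
    (Asymptotics.isBigO_refl (fun n : ℕ => Real.exp (-(κ * n)) / n) atTop)).congr' ?_ ?_
  · filter_upwards [eventually_ne_atTop 0] with n hn
    field_simp
    exact pow_succ' _ _
  · filter_upwards with n
    rw [mul_div_assoc', ← Real.exp_add, add_neg_cancel, Real.exp_zero]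

lemma moveSum_errorTerm_isBigO (hstep : ∀ i ∈ S, ∀ j, i j = -1 ∨ i j = 0 ∨ i j = 1)
    (hw : ∀ i ∈ S, 0 ≤ w i) (hT : ∑ i ∈ S, w i ≠ 0) {k : Fin d} (hq : 0 < moveProb S w k) :
    (fun n : ℕ => moveSum S w n (fun N => errorTerm d (moveProb S w k) n (N k))) =O[atTop]
      fun n : ℕ => (∑ i ∈ S, w i) ^ n / (n : ℝ) := by
  set q := moveProb S w k with hqdef
  have decay_pos : 0 < q * (1 / 2 - Real.exp (-1)) :=
    mul_pos hq (by linarith [Real.exp_neg_one_lt_d9])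
  have expand (n : ℕ) : (fun N : Fin d → ℕ => errorTerm d q n (N k)) =
      (4 : ℝ) • (fun N : Fin d → ℕ => linearTerm q n (N k) ^ 2) +
        (2 / (n * q) : ℝ) • (1 : (Fin d → ℕ) → ℝ) +
        (n ^ d : ℝ) • fun N : Fin d → ℕ => Real.exp (n * q / 2 - N k) := by
    ext N
    simp [errorTerm]
  have tail_isBigO : (fun n : ℕ => (n : ℝ) ^ d *
      moveSum S w n (fun N => Real.exp (n * q / 2 - N k))) =O[atTop]
        fun n : ℕ => (∑ i ∈ S, w i) ^ n / (n : ℝ) := by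
    have majorant := (Asymptotics.isBigO_refl (fun n : ℕ => (∑ i ∈ S, w i) ^ n) atTop).mul
      (isBigO_pow_mul_exp_neg_mul_one_div d decay_pos)
    simp only [mul_one_div] at majorant
    refine (Asymptotics.IsBigO.of_norm_le fun n => ?_).trans majorant
    have tail_nonneg : 0 ≤ moveSum S w n (fun N => Real.exp (n * q / 2 - N k)) := by
      rw [← map_zero (moveSum S w n)]
      exact moveSum_mono hstep hw fun N _ => (Real.exp_pos _).le
    rw [Real.norm_of_nonneg (by positivity), mul_left_comm]
    gcongr
    exact moveSum_exp_sub_le hstep hw hT k n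
  have main_isBigO := Asymptotics.isBigO_const_mul_self ((3 - q) / q)
    (fun n : ℕ => (∑ i ∈ S, w i) ^ n / (n : ℝ)) atTop
  refine (main_isBigO.add tail_isBigO).congr' ?_ .rfl
  filter_upwards [eventually_ne_atTop 0] with n hn
  rw [expand, map_add, map_add, map_smul, map_smul, map_smul, moveSum_one,
    moveSum_linearTerm_sq hstep hT hq.ne' hn, ← hqdef]
  simp only [smul_eq_mul]
  field_simp
  ring

lemma moveSum_prod_scaledStayProb_sub_isBigO
    (hstep : ∀ i ∈ S, ∀ j, i j = -1 ∨ i j = 0 ∨ i j = 1)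
    (hw : ∀ i ∈ S, 0 ≤ w i) (hT : ∑ i ∈ S, w i ≠ 0) (hq : ∀ k, 0 < moveProb S w k) :
    (fun n : ℕ => moveSum S w n (fun N => ∏ k, scaledStayProb (moveProb S w k) n (N k)) -
      (∑ i ∈ S, w i) ^ n) =O[atTop] fun n : ℕ => (∑ i ∈ S, w i) ^ n / (n : ℝ) := by
  obtain ⟨C, hC⟩ := exists_abs_prod_scaledStayProb_sub_le hq
  have error_isBigO := (Asymptotics.IsBigO.sum fun k (_ : k ∈ univ) =>
    moveSum_errorTerm_isBigO hstep hw hT (hq k)).const_mul_left C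
  refine Asymptotics.IsBigO.trans (.of_bound' ?_) error_isBigO
  filter_upwards [eventually_gt_atTop 0] with n hn
  set r : (Fin d → ℕ) → ℝ := fun N => ∏ k, scaledStayProb (moveProb S w k) n (N k)
  set a : Fin d → (Fin d → ℕ) → ℝ := fun k N => linearTerm (moveProb S w k) n (N k) with ha
  have center : moveSum S w n r - (∑ i ∈ S, w i) ^ n = moveSum S w n (r - 1 - ∑ k, a k) := by
    have linear_eq_zero (k : Fin d) : moveSum S w n (a k) = 0 :=
      moveSum_linearTerm hstep hT (hq k).ne' hn.ne'
    rw [map_sub, map_sub, moveSum_one, map_sum, sum_eq_zero fun k _ => linear_eq_zero k, sub_zero]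
  rw [center, Real.norm_eq_abs]
  refine le_trans ?_ (le_abs_self _)
  rw [Finset.sum_apply, ← map_sum, ← smul_eq_mul, ← map_smul]
  refine abs_moveSum_le hstep hw fun N hN => ?_
  simpa [ha, r] using hC n hn N hN

lemma prod_sqrt_mul_rpow_eq_one {ι : Type*} [Fintype ι] {T : ℝ} (hT : 0 < T) {b : ι → ℝ}
    (hb : ∀ k, 0 < b k) {n : ℕ} (hn : n ≠ 0) :
    (∏ k, √(Real.pi * n * (2 * b k / T) / 2)) *
      ((n : ℝ) ^ (-(Fintype.card ι : ℝ) / 2) *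
        ((T / Real.pi) ^ ((Fintype.card ι : ℝ) / 2) * (∏ k, b k) ^ (-(1 : ℝ) / 2))) = 1 := by
  have prod_pos : 0 < ∏ k, b k := Finset.prod_pos fun k _ => hb k
  have prod_sqrt : ∏ k, √(Real.pi * n * (2 * b k / T) / 2) =
      (n : ℝ) ^ ((Fintype.card ι : ℝ) / 2) / (T / Real.pi) ^ ((Fintype.card ι : ℝ) / 2) *
        (∏ k, b k) ^ ((1 : ℝ) / 2) := by
    have pow_half {x : ℝ} (hx : 0 ≤ x) :
        √x ^ Fintype.card ι = x ^ ((Fintype.card ι : ℝ) / 2) := by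
      rw [Real.sqrt_eq_rpow, ← Real.rpow_mul_natCast hx]
      ring_nf
    have factor (k : ι) : √(Real.pi * n * (2 * b k / T) / 2) =
        √(n / (T / Real.pi)) * b k ^ ((1 : ℝ) / 2) := by
      rw [← Real.sqrt_eq_rpow, ← Real.sqrt_mul (by positivity)]
      congr 1
      field_simp
    simp only [factor]
    rw [prod_mul_distrib, prod_const, card_univ, pow_half (by positivity),
      Real.div_rpow (by positivity) (by positivity),
      Real.finsetProd_rpow _ _ fun k _ => (hb k).le]
  rw [prod_sqrt, neg_div, neg_div, Real.rpow_neg (by positivity), Real.rpow_neg prod_pos.le]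
  field_simp

lemma moveSum_prod_scaledStayProb (hstep : ∀ i ∈ S, ∀ j, i j = -1 ∨ i j = 0 ∨ i j = 1)
    (hsym : ∀ k, SymmetricAxis d S w k) (q : Fin d → ℝ) (n : ℕ) :
    moveSum S w n (fun N => ∏ k, scaledStayProb (q k) n (N k)) =
      (∏ k, √(Real.pi * n * q k / 2)) * walkWeight d S w n := by
  rw [walkWeight_eq_moveSum hstep hsym, ← smul_eq_mul, ← map_smul]
  congr 1
  ext N
  simp only [scaledStayProb, prod_mul_distrib, Pi.smul_apply, smul_eq_mul, mul_comm]

lemma abs_sub_mul_le_of_mul_eq_one {g l s t ε : ℝ} (hl : 0 ≤ l) (hgl : g * l = 1)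
    (h : |g * s - t| ≤ ε) : |s - t * l| ≤ ε * l :=
  calc |s - t * l| = |g * s - t| * l := by
        rw [← abs_of_nonneg hl, ← abs_mul, abs_of_nonneg hl]
        congr 1
        linear_combination -s * hgl
    _ ≤ ε * l := by gcongr

theorem highly_symmetric_asymptotics_general
    (d : ℕ) (hd : 1 ≤ d) (S : Finset (Fin d → ℤ)) (w : (Fin d → ℤ) → ℝ)
    (hstep : ∀ i ∈ S, ∀ j, i j = -1 ∨ i j = 0 ∨ i j = 1)
    (hw : ∀ i ∈ S, 0 ≤ w i)
    (hsym : ∀ k : Fin d, SymmetricAxis d S w k)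
    (hfwd : ∀ k : Fin d, ∃ i ∈ S, i k = 1 ∧ 0 < w i) :
    ∃ C : ℝ, ∀ᶠ n : ℕ in atTop,
      |walkWeight d S w n -
          (∑ i ∈ S, w i) ^ n * (n : ℝ) ^ (-(d : ℝ) / 2) *
            (((∑ i ∈ S, w i) / Real.pi) ^ ((d : ℝ) / 2) *
              (∏ k : Fin d, ∑ i ∈ S.filter fun i => i k = 1, w i) ^ (-(1 : ℝ) / 2))|
        ≤ C * (∑ i ∈ S, w i) ^ n * (n : ℝ) ^ (-(d : ℝ) / 2) / n := by
  set b : Fin d → ℝ := fun k => ∑ i ∈ S with i k = 1, w i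
  set T := ∑ i ∈ S, w i
  have b_pos (k : Fin d) : 0 < b k :=
    sum_pos' (fun i hi => hw i (mem_of_mem_filter i hi)) <| by simpa [and_assoc] using hfwd k
  have T_pos : 0 < T := (b_pos ⟨0, hd⟩).trans_le <|
    sum_le_sum_of_subset_of_nonneg (filter_subset _ S) fun i hi _ => hw i hi
  have moveProb_eq (k : Fin d) : moveProb S w k = 2 * b k / T :=
    moveProb_eq_two_mul_forward_div hstep (hsym k)
  have moveProb_pos (k : Fin d) : 0 < moveProb S w k := by
    rw [moveProb_eq]
    have := b_pos k
    positivity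
  obtain ⟨C, hC⟩ :=
    (moveSum_prod_scaledStayProb_sub_isBigO hstep hw T_pos.ne' moveProb_pos).bound
  set L := (T / Real.pi) ^ ((d : ℝ) / 2) * (∏ k, b k) ^ (-(1 : ℝ) / 2)
  have L_nonneg : 0 ≤ L :=
    mul_nonneg (by positivity) (Real.rpow_nonneg (prod_nonneg fun k _ => (b_pos k).le) _)
  refine ⟨C * L, ?_⟩
  filter_upwards [hC, eventually_ne_atTop 0] with n hn hn0
  have rescale := prod_sqrt_mul_rpow_eq_one T_pos b_pos hn0
  simp only [moveSum_prod_scaledStayProb hstep hsym, moveProb_eq, Real.norm_eq_abs] at hn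
  rw [Fintype.card_fin] at rescale
  set A := (n : ℝ) ^ (-(d : ℝ) / 2)
  calc |walkWeight d S w n - T ^ n * A * L| = |walkWeight d S w n - T ^ n * (A * L)| := by
        rw [mul_assoc (T ^ n)]
    _ ≤ C * |T ^ n / n| * (A * L) :=
        abs_sub_mul_le_of_mul_eq_one (by positivity) rescale hn
    _ = C * L * T ^ n * A / n := by rw [abs_of_nonneg (by positivity)]; ring

/-- Highly symmetric asymptotics (Melczer–Mishna):
`s_n = S(1)^n n^{-d/2} [ (S(1)/π)^{d/2} (b_1⋯b_d)^{-1/2} + O(1/n) ]`. -/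
theorem highly_symmetric_asymptotics
    (d : ℕ) (hd : 1 ≤ d) (S : Finset (Fin d → ℤ)) (w : (Fin d → ℤ) → ℝ)
    (hstep : ∀ i ∈ S, (∀ j, i j = -1 ∨ i j = 0 ∨ i j = 1) ∧ i ≠ 0)
    (hw : ∀ i ∈ S, 0 < w i)
    (hsym : ∀ k : Fin d, SymmetricAxis d S w k)
    (hfwd : ∀ k : Fin d, ∃ i ∈ S, i k = 1)
    (hbwd : ∀ k : Fin d, ∃ i ∈ S, i k = -1) :
    ∃ C : ℝ, ∀ᶠ n : ℕ in atTop,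
      |walkWeight d S w n -
          (∑ i ∈ S, w i) ^ n * (n : ℝ) ^ (-(d : ℝ) / 2) *
            (((∑ i ∈ S, w i) / Real.pi) ^ ((d : ℝ) / 2) *
              (∏ k : Fin d, ∑ i ∈ S.filter fun i => i k = 1, w i) ^ (-(1 : ℝ) / 2))|
        ≤ C * (∑ i ∈ S, w i) ^ n * (n : ℝ) ^ (-(d : ℝ) / 2) / n :=
  highly_symmetric_asymptotics_general d hd S w (fun i hi => (hstep i hi).1)
    (fun i hi => (hw i hi).le) hsym
    fun k => (hfwd k).imp fun i hi => ⟨hi.1, hi.2, hw i hi.1⟩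

end
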